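/- Let V^⊥ = {v ∈ V : B(v,u) = 0 for all u ∈ V} be the radical of B, and define E₂° = ⋃ L(α, ρ̂) ∩ Q̂ over all α ∈ Δ and ρ ∈ Φ⁺ with ρ̂ ≠ α. If ℓ ∈ E(Φ) and ℓ ∉ V^⊥, then ℓ lies in the topological closure of E₂°. -/

import Mathlib

open Filter Topology

noncomputable section

variable {ι V : Type*} [Fintype ι] [NormedAddCommGroup V] [NormedSpace ℝ V]

/-- The set of simple `B`-reflections: the linear automorphisms of `V` given by the
`B`-reflection formula `u ↦ u - 2 (B α u / B α α) • α` associated to a simple root `α ∈ Δ`. -/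
def simpleReflections (B : LinearMap.BilinForm ℝ V) (Δ : Module.Basis ι ℝ V) :
    Set (V ≃ₗ[ℝ] V) :=
  { e | ∃ i : ι, ∀ u : V, e u = u - (2 * B (Δ i) u / B (Δ i) (Δ i)) • Δ i }

/-- The geometric Coxeter group `W`: the subgroup of linear automorphisms of `V`
generated by the simple `B`-reflections. -/
def cox (B : LinearMap.BilinForm ℝ V) (Δ : Module.Basis ι ℝ V) : Subgroup (V ≃ₗ[ℝ] V) :=
  Subgroup.closure (simpleReflections B Δ)

/-- The root system `Φ = W ⬝ Δ`. -/
def Phi (B : LinearMap.BilinForm ℝ V) (Δ : Module.Basis ι ℝ V) : Set V :=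
  { ρ | ∃ w ∈ cox B Δ, ∃ i : ι, w (Δ i) = ρ }

/-- The positive roots `Φ⁺ = Φ ∩ cone(Δ)`. -/
def posPhi (B : LinearMap.BilinForm ℝ V) (Δ : Module.Basis ι ℝ V) : Set V :=
  { ρ ∈ Phi B Δ | ∀ i : ι, 0 ≤ Δ.repr ρ i }

/-- `|v|₁`: the sum of the coordinates of `v` in the basis `Δ`. -/
def l1 (Δ : Module.Basis ι ℝ V) (v : V) : ℝ := ∑ i : ι, Δ.repr v i

/-- The normalization map `v ↦ v̂ = v / |v|₁`. -/
def nrm (Δ : Module.Basis ι ℝ V) (v : V) : V := (l1 Δ v)⁻¹ • v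

/-- The set `Φ̂` of normalized roots. -/
def nPhi (B : LinearMap.BilinForm ℝ V) (Δ : Module.Basis ι ℝ V) : Set V :=
  nrm Δ '' posPhi B Δ

/-- `E(Φ)`: the set of accumulation points of the set of normalized roots. -/
def Eset (B : LinearMap.BilinForm ℝ V) (Δ : Module.Basis ι ℝ V) : Set V :=
  { x | AccPt x (𝓟 (nPhi B Δ)) }

/-- The isotropic cone `Q` of `B`. -/
def isoQ (B : LinearMap.BilinForm ℝ V) : Set V := { v | B v v = 0 }

/-- The affine line through two points `a` and `b`. -/
def lineThrough (a b : V) : Set V := { y : V | ∃ t : ℝ, y = a + t • (b - a) }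

/-- `E₂`: the union over all pairs of distinct positive roots `ρ₁, ρ₂` of
`L(ρ̂₁, ρ̂₂) ∩ Q̂`. -/
def E2 (B : LinearMap.BilinForm ℝ V) (Δ : Module.Basis ι ℝ V) : Set V :=
  { x : V | ∃ ρ₁ ∈ posPhi B Δ, ∃ ρ₂ ∈ posPhi B Δ, ρ₁ ≠ ρ₂ ∧
      x ∈ lineThrough (nrm Δ ρ₁) (nrm Δ ρ₂) ∧ B x x = 0 ∧ l1 Δ x = 1 }

/-- `E₂°`: the union over all `α ∈ Δ` and `ρ ∈ Φ⁺` with `ρ̂ ≠ α` of `L(α, ρ̂) ∩ Q̂`. -/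
def E2circ (B : LinearMap.BilinForm ℝ V) (Δ : Module.Basis ι ℝ V) : Set V :=
  { x : V | ∃ i : ι, ∃ ρ ∈ posPhi B Δ, nrm Δ ρ ≠ Δ i ∧
      x ∈ lineThrough (Δ i) (nrm Δ ρ) ∧ B x x = 0 ∧ l1 Δ x = 1 }

/-! ### Words and length -/

def altL {κ : Type*} (s t : κ) (k : ℕ) : κ := if Even k then t else s

def altW {κ G : Type*} [Group G] (S : κ → G) (s t : κ) : ℕ → G
  | 0 => 1
  | k + 1 => S (altL s t k) * altW S s t k

lemma altL_succ {κ : Type*} (s t : κ) (k : ℕ) : altL s t (k+1) = altL t s k := by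
  unfold altL
  by_cases h : Even k <;> simp [h, Nat.even_add_one]

lemma altW_succ' {κ G : Type*} [Group G] (S : κ → G) (k : ℕ) : ∀ s t : κ,
    altW S s t (k+1) = altW S t s k * S t := by
  induction k with
  | zero => intro s t; simp [altW, altL]
  | succ k ih =>
    intro s t
    rw [altW, ih s t, altW, altL_succ, mul_assoc]

section words
variable {κ G : Type*} [Group G] (S : κ → G)

def wd' (l : List κ) : G := (l.map S).prod

def len' (w : G) : ℕ := sInf { n | ∃ l : List κ, l.length = n ∧ wd' S l = w }

def isW (w : G) : Prop := ∃ l : List κ, wd' S l = w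

lemma len'_le (l : List κ) : len' S (wd' S l) ≤ l.length :=
  Nat.sInf_le ⟨l, rfl, rfl⟩

lemma exists_red {w : G} (h : isW S w) : ∃ l : List κ, l.length = len' S w ∧ wd' S l = w := by
  obtain ⟨l, hl⟩ := h
  exact Nat.sInf_mem (s := { n | ∃ l : List κ, l.length = n ∧ wd' S l = w }) ⟨_, l, rfl, hl⟩

lemma isW_mul {w w' : G} (h : isW S w) (h' : isW S w') : isW S (w * w') := by
  obtain ⟨l, rfl⟩ := h
  obtain ⟨l', rfl⟩ := h'
  exact ⟨l ++ l', by simp [wd']⟩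

lemma isW_S (i : κ) : isW S (S i) := ⟨[i], by simp [wd']⟩

lemma isW_one : isW S 1 := ⟨[], by simp [wd']⟩

lemma len'_one : len' S (1 : G) = 0 := by
  have := len'_le S []
  simpa [wd'] using this

lemma len'_mul {w w' : G} (h : isW S w) (h' : isW S w') :
    len' S (w * w') ≤ len' S w + len' S w' := by
  obtain ⟨l, hl, rfl⟩ := exists_red S h
  obtain ⟨l', hl', rfl⟩ := exists_red S h'
  have := len'_le S (l ++ l')
  rw [List.length_append, hl, hl'] at this
  simpa [wd'] using this

lemma len'_S (i : κ) : len' S (S i) ≤ 1 := by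
  have := len'_le S [i]
  simpa [wd'] using this

lemma isW_altW (s t : κ) (k : ℕ) : isW S (altW S s t k) := by
  induction k with
  | zero => exact isW_one S
  | succ k ih => exact isW_mul S (isW_S S _) ih

lemma len'_altW (s t : κ) (k : ℕ) : len' S (altW S s t k) ≤ k := by
  induction k with
  | zero => simp [altW, len'_one]
  | succ k ih =>
    have h1 := len'_mul S (isW_S S (altL s t k)) (isW_altW S s t k)
    have h2 := len'_S S (altL s t k)
    rw [altW]; omega

variable (hinv : ∀ i, S i * S i = 1)
include hinv

lemma mulSS (w : G) (i : κ) : w * S i * S i = w := by rw [mul_assoc, hinv, mul_one]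

lemma exists_descent {w : G} (h : isW S w) (h1 : w ≠ 1) : ∃ i, len' S (w * S i) < len' S w := by
  obtain ⟨l, hl, rfl⟩ := exists_red S h
  rcases List.eq_nil_or_concat l with rfl | ⟨l', i, rfl⟩
  · simp [wd'] at h1
  · refine ⟨i, ?_⟩
    have e : wd' S (l' ++ [i]) * S i = wd' S l' := by
      have : wd' S (l' ++ [i]) = wd' S l' * S i := by simp [wd']
      rw [this, mulSS S hinv]
    simp only [List.concat_eq_append] at *
    rw [e]
    have := len'_le S l'
    simp at hl
    omega

/-- `v` is a prefix of `w` with alternating tail of length `k`. -/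
lemma alt_decomp {w : G} (hw : isW S w) {s t : κ} 
    (ht : len' S (w * S t) < len' S w) :
    ∃ k v, 1 ≤ k ∧ isW S v ∧ w = v * altW S s t k ∧ len' S v + k = len' S w ∧
      len' S v ≤ len' S (v * S s) ∧ len' S v ≤ len' S (v * S t) := by
  classical
  let P : ℕ → Prop := fun k => ∃ v, isW S v ∧ w = v * altW S s t k ∧ len' S v + k = len' S w
  have hP1 : P 1 := by
    refine ⟨w * S t, isW_mul S hw (isW_S S t), ?_, ?_⟩
    · simp [altW, altL, mulSS S hinv]
    · have h1 := len'_mul S (isW_mul S hw (isW_S S t)) (isW_S S t)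
      rw [mulSS S hinv] at h1
      have := len'_S S t
      omega
  have hb : ∀ k, P k → k ≤ len' S w := by
    rintro k ⟨v, -, -, h⟩; omega
  have hne : 1 ≤ len' S w := hb 1 hP1
  set k := Nat.findGreatest P (len' S w) with hk
  have hPk : P k := Nat.findGreatest_spec (P := P) hne hP1
  have hk1 : 1 ≤ k := Nat.le_findGreatest hne hP1
  have hmax : ¬ P (k+1) := by
    intro h
    have := Nat.le_findGreatest (hb _ h) h
    omega
  obtain ⟨v, hv, hwv, hlen⟩ := hPk
  have hx : len' S v ≤ len' S (v * S (altL s t k)) := by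
    by_contra hlt
    push Not at hlt
    apply hmax
    refine ⟨v * S (altL s t k), isW_mul S hv (isW_S S _), ?_, ?_⟩
    · rw [altW, ← mul_assoc, mulSS S hinv]; exact hwv
    · have h1 := len'_mul S (isW_mul S hv (isW_S S (altL s t k))) (isW_S S (altL s t k))
      rw [mulSS S hinv] at h1
      have := len'_S S (altL s t k)
      omega
  have hy : len' S v ≤ len' S (v * S (altL s t (k+1))) := by
    by_contra hlt
    push Not at hlt
    obtain ⟨j, hj⟩ : ∃ j, k = j + 1 := ⟨k-1, by omega⟩
    rw [altL_succ, hj, altL_succ] at hlt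
    have e : w = (v * S (altL s t j)) * altW S s t j := by
      rw [hwv, hj, altW, mul_assoc]
    have h1 := len'_mul S (isW_mul S hv (isW_S S (altL s t j))) (isW_altW S s t j)
    rw [← e] at h1
    have h2 := len'_altW S s t j
    omega
  refine ⟨k, v, hk1, hv, hwv, hlen, ?_⟩
  rw [altL_succ] at hy
  unfold altL at hx hy
  by_cases h : Even k <;> simp [h] at hx hy <;> exact ⟨by assumption, by assumption⟩

omit hinv in
lemma alt_shorten {w : G} {s t : κ} (m j : ℕ) : ∀ v, isW S v → w = v * altW S s t (m + j) →
    len' S v + (m + j) = len' S w →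
    ∃ v', isW S v' ∧ w = v' * altW S s t m ∧ len' S v' + m = len' S w := by
  induction j with
  | zero => intro v hv h1 h2; exact ⟨v, hv, h1, h2⟩
  | succ j ih =>
    intro v hv h1 h2
    have e : w = (v * S (altL s t (m+j))) * altW S s t (m+j) := by
      rw [h1, ← add_assoc, altW, mul_assoc]
    refine ih (v * S (altL s t (m+j))) (isW_mul S hv (isW_S S _)) e ?_
    have h3 := len'_mul S (isW_mul S hv (isW_S S (altL s t (m+j)))) (isW_altW S s t (m+j))
    rw [← e] at h3
    have h4 := len'_altW S s t (m+j)
    have h5 := len'_mul S hv (isW_S S (altL s t (m+j)))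
    have h6 := len'_S S (altL s t (m+j))
    omega

/-- With the braid relation of length `m`, the alternating tail is shorter than `m`. -/
lemma alt_lt {w : G} {s t : κ} (hs : len' S w ≤ len' S (w * S s))
    {m k : ℕ} (hm : 1 ≤ m) (hbraid : altW S s t m = altW S t s m) {v : G} (hv : isW S v)
    (h1 : w = v * altW S s t k) (h2 : len' S v + k = len' S w) : k < m := by
  by_contra hk
  push Not at hk
  obtain ⟨j, rfl⟩ := Nat.exists_eq_add_of_le hk
  obtain ⟨v', hv', e, hl⟩ := alt_shorten S m j v hv h1 h2
  obtain ⟨n, rfl⟩ : ∃ n, m = n + 1 := ⟨m-1, by omega⟩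
  rw [hbraid, altW_succ', ← mul_assoc] at e
  have e2 : w * S s = v' * altW S s t n := by rw [e, mulSS S hinv]
  have h3 := len'_mul S hv' (isW_altW S s t n)
  have h4 := len'_altW S s t n
  rw [← e2] at h3
  omega

end words

set_option linter.unusedSectionVars false

/-! ### Chebyshev-like sequence -/

def cheb (c : ℝ) : ℕ → ℝ
  | 0 => 0
  | 1 => 1
  | k + 2 => 2 * c * cheb c (k+1) - cheb c k

lemma cheb_ge {c : ℝ} (hc : 1 ≤ c) (k : ℕ) : 0 ≤ cheb c k ∧ cheb c k ≤ cheb c (k+1) := by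
  induction k with
  | zero => simp [cheb]
  | succ k ih =>
    refine ⟨by linarith, ?_⟩
    rw [cheb]
    nlinarith

lemma cheb_sin (θ : ℝ) (k : ℕ) : cheb (Real.cos θ) k * Real.sin θ = Real.sin (k * θ) ∧
    cheb (Real.cos θ) (k+1) * Real.sin θ = Real.sin ((k+1) * θ) := by
  induction k with
  | zero => simp [cheb]
  | succ k ih =>
    refine ⟨by push_cast; exact ih.2, ?_⟩
    rw [cheb, sub_mul, ih.1, mul_assoc, ih.2]
    push_cast
    have e1 : ((k:ℝ)+1+1)*θ = ((k:ℝ)+1)*θ + θ := by ring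
    have e2 : (k:ℝ)*θ = ((k:ℝ)+1)*θ - θ := by ring
    rw [e1, e2, Real.sin_add, Real.sin_sub]
    ring

section geom
variable (B : LinearMap.BilinForm ℝ V) (Δ : Module.Basis ι ℝ V) (S : ι → (V ≃ₗ[ℝ] V))

def nonneg (v : V) : Prop := ∀ i, 0 ≤ Δ.repr v i

lemma nonneg_comb {u v : V} {a b : ℝ} (ha : 0 ≤ a) (hb : 0 ≤ b) (hu : nonneg Δ u)
    (hv : nonneg Δ v) : nonneg Δ (a • u + b • v) := by
  intro i
  have := mul_nonneg ha (hu i)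
  have := mul_nonneg hb (hv i)
  simp
  linarith

variable (hsymm : ∀ u v : V, B u v = B v u)
    (hdiag : ∀ i : ι, B (Δ i) (Δ i) = 1)
    (hS : ∀ i u, S i u = u - (2 * B (Δ i) u) • Δ i)

include hdiag hS

lemma S_inv (i : ι) : S i * S i = 1 := by
  ext u
  rw [LinearEquiv.mul_apply, hS, hS]
  simp [hdiag]
  module

lemma S_self (i : ι) : S i (Δ i) = - Δ i := by
  rw [hS, hdiag]; module

include hsymm

omit hdiag in
lemma S_alt {s t : ι} {c : ℝ} (hc : B (Δ s) (Δ t) = -c) (k : ℕ) :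
    S (altL s t k) (Δ (altL s t (k+1))) = Δ (altL s t (k+1)) + (2 * c) • Δ (altL s t k) := by
  rw [hS, altL_succ]
  have : B (Δ (altL s t k)) (Δ (altL t s k)) = -c := by
    unfold altL
    by_cases h : Even k
    · simp [h]; rw [hsymm, hc]
    · simp [h, hc]
  rw [this]; module

lemma altW_apply {s t : ι} {c : ℝ} (hc : B (Δ s) (Δ t) = -c) (k : ℕ) :
    altW S s t k (Δ s) = cheb c (k+1) • Δ (altL s t (k+1)) + cheb c k • Δ (altL s t k) := by
  induction k with
  | zero => simp [altW, altL, cheb]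
  | succ k ih =>
    rw [altW, LinearEquiv.mul_apply, ih, map_add, map_smul, map_smul,
      S_alt B Δ S hsymm hS hc, S_self B Δ S hdiag hS, cheb]
    have : altL s t (k+1+1) = altL s t k := by rw [altL_succ, altL_succ]
    rw [this]
    module

omit hsymm hdiag in
lemma altW_fix {s t : ι} {u : V} (h1 : B (Δ s) u = 0) (h2 : B (Δ t) u = 0) (k : ℕ) :
    altW S s t k u = u := by
  induction k with
  | zero => simp [altW]
  | succ k ih =>
    rw [altW, LinearEquiv.mul_apply, ih, hS]
    have : B (Δ (altL s t k)) u = 0 := by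
      unfold altL; split_ifs <;> assumption
    simp [this]

lemma braid_aux {s t : ι} {c : ℝ} (hc : B (Δ s) (Δ t) = -c) {n : ℕ}
    (h0 : cheb c (n+1) = 0) (h1 : cheb c n = 1) (h2 : cheb c (n+2) = -1) :
    altW S s t (n+1) (Δ s) = altW S t s (n+1) (Δ s) := by
  rw [altW_apply B Δ S hsymm hdiag hS hc, altW_succ' S n t s, LinearEquiv.mul_apply,
    S_self B Δ S hdiag hS, map_neg, altW_apply B Δ S hsymm hdiag hS hc, h0, h1, h2]
  have : altL s t (n+1+1) = altL s t n := by rw [altL_succ, altL_succ]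
  rw [this]
  module

lemma braid {s t : ι} {k : ℕ} (hk : 2 ≤ k)
    (hc : B (Δ s) (Δ t) = -Real.cos (Real.pi / (k : ℝ))) :
    altW S s t k = altW S t s k := by
  obtain ⟨n, rfl⟩ : ∃ n, k = n + 1 := ⟨k-1, by omega⟩
  set θ := Real.pi / ((n + 1 : ℕ) : ℝ) with hθ
  have hnp : (0:ℝ) < ((n+1 : ℕ) : ℝ) := by positivity
  have hmul : ((n:ℝ)+1) * θ = Real.pi := by
    rw [hθ]; push_cast; field_simp
  have hsin : 0 < Real.sin θ := by
    apply Real.sin_pos_of_pos_of_lt_pi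
    · positivity
    · rw [hθ]; apply div_lt_self Real.pi_pos; exact_mod_cast hk
  have c1 := cheb_sin θ n
  have c2 := (cheb_sin θ (n+1)).2
  rw [hmul, Real.sin_pi] at c1
  have h0 : cheb (Real.cos θ) (n+1) = 0 := by
    rcases mul_eq_zero.1 c1.2 with h | h
    · exact h
    · linarith
  have h1 : cheb (Real.cos θ) n = 1 := by
    have : (n:ℝ) * θ = Real.pi - θ := by linarith
    rw [this, Real.sin_pi_sub] at c1
    exact mul_right_cancel₀ hsin.ne' (by rw [c1.1, one_mul])
  have h2 : cheb (Real.cos θ) (n+2) = -1 := by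
    rw [cheb, h0, h1]; ring
  have hc' : B (Δ t) (Δ s) = -Real.cos θ := by rw [hsymm, hc]
  have es := braid_aux B Δ S hsymm hdiag hS hc h0 h1 h2
  have et := braid_aux B Δ S hsymm hdiag hS hc' h0 h1 h2
  set c := Real.cos θ with hcd
  have hd : 1 - c^2 ≠ 0 := by
    have := Real.sin_sq_add_cos_sq θ
    have : 1 - c^2 = Real.sin θ ^2 := by rw [hcd]; linarith
    rw [this]; positivity
  ext u
  set p := B (Δ s) u
  set q := B (Δ t) u
  set a := (p + c * q) / (1 - c^2) with ha
  set b := (q + c * p) / (1 - c^2) with hb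
  obtain ⟨z, hz⟩ : ∃ z, z = u - a • Δ s - b • Δ t := ⟨_, rfl⟩
  have hu : u = z + a • Δ s + b • Δ t := by rw [hz]; module
  have z1 : B (Δ s) z = 0 := by
    rw [hz]; simp only [map_sub, map_smul, smul_eq_mul, hdiag, hc]
    change p - _ - _ = 0
    rw [ha, hb]; field_simp; ring
  have z2 : B (Δ t) z = 0 := by
    rw [hz]; simp only [map_sub, map_smul, smul_eq_mul, hdiag, hc']
    change q - _ - _ = 0
    rw [ha, hb]; field_simp; ring
  rw [hu]
  simp only [map_add, map_smul]
  rw [altW_fix B Δ S hS z1 z2, altW_fix B Δ S hS z2 z1, es, et]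

variable (hoff : ∀ i j : ι, i ≠ j → B (Δ i) (Δ j) ≤ -1 ∨
      ∃ k : ℕ, 2 ≤ k ∧ B (Δ i) (Δ j) = -Real.cos (Real.pi / (k : ℝ)))
include hoff

lemma main_pos (n : ℕ) : ∀ w, isW S w → len' S w = n → ∀ s, len' S w ≤ len' S (w * S s) →
    nonneg Δ (w (Δ s)) := by
  classical
  induction n using Nat.strong_induction_on with
  | _ n ih =>
  intro w hw hn s hs
  by_cases h1 : w = 1
  · subst h1
    intro i
    simp [Finsupp.single_apply]
    split_ifs <;> norm_num
  obtain ⟨t, ht⟩ := exists_descent S (S_inv B Δ S hdiag hS) hw h1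
  have hst : s ≠ t := by rintro rfl; omega
  obtain ⟨k, v, hk1, hv, hwv, hlen, hvs, hvt⟩ :=
    alt_decomp S (S_inv B Δ S hdiag hS) hw (s := s) ht
  have ps := ih (len' S v) (by omega) v hv rfl s hvs
  have pt := ih (len' S v) (by omega) v hv rfl t hvt
  have pL : ∀ j, nonneg Δ (v (Δ (altL s t j))) := by
    intro j; unfold altL; split_ifs <;> assumption
  obtain ⟨c, hc⟩ : ∃ c, B (Δ s) (Δ t) = -c := ⟨-B (Δ s) (Δ t), by ring⟩
  have key : 0 ≤ cheb c (k+1) ∧ 0 ≤ cheb c k := by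
    rcases hoff s t hst with h | ⟨m, hm, h⟩
    · have hc1 : 1 ≤ c := by linarith
      exact ⟨(cheb_ge hc1 _).1, (cheb_ge hc1 _).1⟩
    · have hkm := alt_lt S (S_inv B Δ S hdiag hS) hs (by omega)
        (braid B Δ S hsymm hdiag hS hm h) hv hwv hlen
      have hcc : c = Real.cos (Real.pi / (m : ℝ)) := by linarith
      rw [hcc]
      have hmp : (2:ℝ) ≤ (m : ℝ) := by exact_mod_cast hm
      have hθ : 0 < Real.pi / (m:ℝ) := by have := Real.pi_pos; positivity
      have hsin : 0 < Real.sin (Real.pi / (m : ℝ)) := by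
        apply Real.sin_pos_of_pos_of_lt_pi hθ
        apply div_lt_self Real.pi_pos; linarith
      have aux : ∀ j : ℕ, j ≤ m → 0 ≤ cheb (Real.cos (Real.pi / (m : ℝ))) j := by
        intro j hj
        have e := (cheb_sin (Real.pi / (m:ℝ)) j).1
        have : 0 ≤ Real.sin (j * (Real.pi / (m:ℝ))) := by
          apply Real.sin_nonneg_of_nonneg_of_le_pi
          · positivity
          · have : (j:ℝ) ≤ m := by exact_mod_cast hj
            calc (j:ℝ) * (Real.pi / m) ≤ m * (Real.pi / m) := by gcongr
              _ = Real.pi := by field_simp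
        rw [← e] at this
        exact nonneg_of_mul_nonneg_left this hsin
      exact ⟨aux _ (by omega), aux _ (by omega)⟩
  rw [hwv, LinearEquiv.mul_apply, altW_apply B Δ S hsymm hdiag hS hc, map_add, map_smul, map_smul]
  exact nonneg_comb Δ key.1 key.2 (pL _) (pL _)

lemma neg_of_descent {w : V ≃ₗ[ℝ] V} (hw : isW S w) {s : ι}
    (h : len' S (w * S s) < len' S w) : nonneg Δ (-(w (Δ s))) := by
  have := main_pos B Δ S hsymm hdiag hS hoff _ (w * S s) (isW_mul S hw (isW_S S s)) rfl s
    (by rw [mulSS S (S_inv B Δ S hdiag hS)]; exact h.le)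
  rwa [LinearEquiv.mul_apply, S_self B Δ S hdiag hS, map_neg] at this

/-- An element of `W` close to the identity is the identity. -/
lemma eq_one_of_near {w : V ≃ₗ[ℝ] V} (hw : isW S w) (h : ∀ i, 0 < Δ.repr (w (Δ i)) i) :
    w = 1 := by
  by_contra h1
  obtain ⟨t, ht⟩ := exists_descent S (S_inv B Δ S hdiag hS) hw h1
  have := neg_of_descent B Δ S hsymm hdiag hS hoff hw ht t
  have := h t
  simp at *
  linarith

omit hdiag hoff hsymm in
lemma isW_of_cox (hdiag : ∀ i : ι, B (Δ i) (Δ i) = 1) {w : V ≃ₗ[ℝ] V} (hw : w ∈ cox B Δ) :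
    isW S w := by
  have hinv := S_inv B Δ S hdiag hS
  unfold cox at hw
  induction hw using Subgroup.closure_induction with
  | mem x hx =>
    obtain ⟨i, hi⟩ := hx
    have : x = S i := by
      ext u; rw [hi, hS, hdiag, div_one]
    rw [this]; exact isW_S S i
  | one => exact isW_one S
  | mul x y _ _ hx hy => exact isW_mul S hx hy
  | inv x _ hx =>
    obtain ⟨l, rfl⟩ := hx
    have key : ∀ l : List ι, wd' S l.reverse = (wd' S l)⁻¹ := by
      intro l
      induction l with
      | nil => simp [wd']
      | cons a l ih =>
        have e1 : wd' S (a :: l) = S a * wd' S l := by simp [wd']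
        have e2 : wd' S (a :: l).reverse = wd' S l.reverse * S a := by simp [wd']
        rw [e1, e2, ih, mul_inv_rev]
        congr 1
        exact eq_inv_of_mul_eq_one_left (hinv a)
    exact ⟨l.reverse, key l⟩

omit hoff in
lemma isW_form {w : V ≃ₗ[ℝ] V} (hw : isW S w) (u v : V) : B (w u) (w v) = B u v := by
  obtain ⟨l, rfl⟩ := hw
  induction l generalizing u v with
  | nil => simp [wd']
  | cons a l ih =>
    have e1 : wd' S (a :: l) = S a * wd' S l := by simp [wd']
    rw [e1, LinearEquiv.mul_apply, LinearEquiv.mul_apply, hS, hS, ← ih u v]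
    simp [hdiag]
    rw [hsymm _ (Δ a)]
    ring

end geom

/-- The `B`-reflection in `x`. -/
def refl' (B : LinearMap.BilinForm ℝ V) (x u : V) : V := u - (2 * B x u / B x x) • x

lemma exists_S (B : LinearMap.BilinForm ℝ V) (Δ : Module.Basis ι ℝ V)
    (hdiag : ∀ i : ι, B (Δ i) (Δ i) = 1) :
    ∃ S : ι → (V ≃ₗ[ℝ] V), ∀ i u, S i u = u - (2 * B (Δ i) u) • Δ i := by
  have h : ∀ i, ((2:ℝ) • B (Δ i)) (Δ i) = 2 := by intro i; simp [hdiag]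
  refine ⟨fun i => Module.reflection (h i), fun i u => ?_⟩
  rw [Module.reflection_apply]
  simp

lemma l1_add (Δ : Module.Basis ι ℝ V) (u v : V) : l1 Δ (u + v) = l1 Δ u + l1 Δ v := by
  simp [l1, Finset.sum_add_distrib]

lemma l1_smul (Δ : Module.Basis ι ℝ V) (a : ℝ) (v : V) : l1 Δ (a • v) = a * l1 Δ v := by
  simp [l1, Finset.mul_sum]

lemma l1_basis (Δ : Module.Basis ι ℝ V) (i : ι) : l1 Δ (Δ i) = 1 := by
  classical
  simp [l1, Finsupp.single_apply]

section geom2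
variable (B : LinearMap.BilinForm ℝ V) (Δ : Module.Basis ι ℝ V) (S : ι → (V ≃ₗ[ℝ] V))
  (hsymm : ∀ u v : V, B u v = B v u)
    (hdiag : ∀ i : ι, B (Δ i) (Δ i) = 1)
    (hS : ∀ i u, S i u = u - (2 * B (Δ i) u) • Δ i)
include hsymm hdiag hS

lemma isW_inv_mul {w : V ≃ₗ[ℝ] V} (hw : w ∈ cox B Δ) : isW S w ∧ isW S w⁻¹ :=
  ⟨isW_of_cox B Δ S hS hdiag hw, isW_of_cox B Δ S hS hdiag (inv_mem hw)⟩

/-- Facts about a normalized root: normalization, and its reflection is in `W`. -/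
lemma nroot_facts {x : V} (hx : x ∈ nPhi B Δ) :
    l1 Δ x = 1 ∧ B x x ≠ 0 ∧ ∃ r : V ≃ₗ[ℝ] V, isW S r ∧ ∀ u, r u = refl' B x u := by
  obtain ⟨ρ, ⟨⟨w, hw, i, rfl⟩, hpos⟩, rfl⟩ := hx
  obtain ⟨h1, h2⟩ := isW_inv_mul B Δ S hsymm hdiag hS hw
  have hB : B (w (Δ i)) (w (Δ i)) = 1 := by
    rw [isW_form B Δ S hsymm hdiag hS h1, hdiag]
  set ρ := w (Δ i) with hρ
  have hl : l1 Δ ρ ≠ 0 := by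
    intro h0
    have := (Finset.sum_eq_zero_iff_of_nonneg (fun i _ => hpos i)).1 h0
    have : ρ = 0 := by
      apply Δ.repr.injective
      ext j
      simpa using this j (Finset.mem_univ j)
    rw [this] at hB
    simp at hB
  refine ⟨?_, ?_, w * S i * w⁻¹, isW_mul S (isW_mul S h1 (isW_S S i)) h2, ?_⟩
  · rw [nrm, l1_smul, inv_mul_cancel₀ hl]
  · simp [nrm, hB, hl]
  · intro u
    rw [LinearEquiv.mul_apply, LinearEquiv.mul_apply, hS, map_sub, map_smul]
    have e1 : w (w⁻¹ u) = u := by rw [← LinearEquiv.mul_apply]; simp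
    have e2 : B (Δ i) (w⁻¹ u) = B ρ u := by
      rw [← isW_form B Δ S hsymm hdiag hS h1, e1]
    rw [e1, e2, ← hρ, refl', nrm]
    simp only [map_smul, LinearMap.smul_apply, smul_eq_mul, hB, smul_smul]
    congr 2
    field_simp

end geom2

lemma refl'_refl' (B : LinearMap.BilinForm ℝ V) {x : V} (hx : B x x ≠ 0) (u : V) :
    refl' B x (refl' B x u) = u := by
  unfold refl'
  simp only [map_sub, map_smul, smul_eq_mul]
  have : 2 * (B x u - 2 * B x u / B x x * B x x) / B x x = - (2 * B x u / B x x) := by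
    field_simp; ring
  rw [this]; module

lemma cont_B (B : LinearMap.BilinForm ℝ V) [FiniteDimensional ℝ V] :
    Continuous (fun p : V × V => B p.1 p.2) := by
  have h1 : Continuous (fun v => LinearMap.toContinuousLinearMap (B v)) :=
    (LinearMap.continuous_of_finiteDimensional
      ((LinearMap.toContinuousLinearMap : (V →ₗ[ℝ] ℝ) ≃ₗ[ℝ] (V →L[ℝ] ℝ)).toLinearMap ∘ₗ B))
  exact (h1.comp continuous_fst).clm_apply continuous_snd

lemma cont_refl' (B : LinearMap.BilinForm ℝ V) [FiniteDimensional ℝ V] {x : V} (hx : B x x ≠ 0)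
    (u : V) : ContinuousAt (fun p : V × V => refl' B p.1 p.2) (x, u) := by
  unfold refl'
  have h1 := cont_B B
  have h2 : Continuous (fun p : V × V => B p.1 p.1) := h1.comp (continuous_fst.prodMk continuous_fst)
  refine continuousAt_snd.sub (ContinuousAt.smul (ContinuousAt.div ?_ h2.continuousAt hx)
    continuousAt_fst)
  exact (h1.continuousAt).const_mul 2

lemma accPt_isotropic (B : LinearMap.BilinForm ℝ V) (Δ : Module.Basis ι ℝ V)
    (hsymm : ∀ u v : V, B u v = B v u)
    (hdiag : ∀ i : ι, B (Δ i) (Δ i) = 1)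
    (hoff : ∀ i j : ι, i ≠ j → B (Δ i) (Δ j) ≤ -1 ∨
      ∃ k : ℕ, 2 ≤ k ∧ B (Δ i) (Δ j) = -Real.cos (Real.pi / (k : ℝ)))
    (ℓ : V) (hℓ : ℓ ∈ Eset B Δ) : B ℓ ℓ = 0 := by
  have : FiniteDimensional ℝ V := Δ.finiteDimensional_of_finite
  by_contra hne
  obtain ⟨S, hS⟩ := exists_S B Δ hdiag
  have hev : ∀ᶠ p : V × V in 𝓝 (ℓ, ℓ), ∀ i,
      0 < Δ.repr (refl' B p.1 (refl' B p.2 (Δ i))) i := by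
    rw [eventually_all]
    intro i
    have c1 : ContinuousAt (fun p : V × V => refl' B p.2 (Δ i)) (ℓ, ℓ) :=
      ContinuousAt.comp (x := (ℓ, ℓ)) (g := fun p : V × V => refl' B p.1 p.2)
        (f := fun p : V × V => (p.2, Δ i)) (cont_refl' B hne (Δ i))
        (continuousAt_snd.prodMk continuousAt_const)
    have c2 : ContinuousAt (fun p : V × V => refl' B p.1 (refl' B p.2 (Δ i))) (ℓ, ℓ) :=
      ContinuousAt.comp (x := (ℓ, ℓ)) (g := fun p : V × V => refl' B p.1 p.2)
        (f := fun p : V × V => (p.1, refl' B p.2 (Δ i)))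
        (cont_refl' B hne _) (continuousAt_fst.prodMk c1)
    have c3 : Continuous (fun v => Δ.repr v i) :=
      LinearMap.continuous_of_finiteDimensional (Δ.coord i)
    have c4 := ContinuousAt.comp (f := fun p : V × V => refl' B p.1 (refl' B p.2 (Δ i)))
      (x := (ℓ, ℓ)) c3.continuousAt c2
    refine c4.eventually_const_lt ?_
    simp [refl'_refl' B hne]
  rw [nhds_prod_eq] at hev
  obtain ⟨U, hU, hUU⟩ := eventually_prod_self_iff'.1 hev
  have hacc := accPt_iff_frequently.1 hℓ
  obtain ⟨x, ⟨hxl, hxN⟩, hxU⟩ := (hacc.and_eventually hU).exists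
  have hne' : ∀ᶠ y in 𝓝 ℓ, y ≠ x := isOpen_ne.mem_nhds hxl.symm
  obtain ⟨y, ⟨⟨_, hyN⟩, hyU⟩, hyx⟩ := ((hacc.and_eventually hU).and_eventually hne').exists
  obtain ⟨lx, Bx, r, hr, hrx⟩ := nroot_facts B Δ S hsymm hdiag hS hxN
  obtain ⟨ly, By, r', hr', hry⟩ := nroot_facts B Δ S hsymm hdiag hS hyN
  have h1 := eq_one_of_near B Δ S hsymm hdiag hS hoff (isW_mul S hr hr') (by
    intro i
    rw [LinearEquiv.mul_apply, hry, hrx]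
    exact hUU x hxU y hyU i)
  have h2 : refl' B x (refl' B y y) = y := by
    rw [← hry, ← hrx, ← LinearEquiv.mul_apply, h1]; rfl
  have h3 : refl' B y y = -y := by
    unfold refl'
    rw [mul_div_assoc, div_self By]; module
  rw [h3] at h2
  unfold refl' at h2
  set a := 2 * B x (-y) / B x x
  have h4 : (2:ℝ) • y = (-a) • x := by
    have : y = -y - a • x := h2.symm
    calc (2:ℝ) • y = y + y := two_smul ℝ y
      _ = y + (-y - a • x) := by rw [← this]
      _ = _ := by module
  have h5 := congrArg (l1 Δ) h4
  rw [l1_smul, l1_smul, lx, ly, mul_one, mul_one] at h5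
  rw [← h5] at h4
  exact hyx (smul_right_injective V (two_ne_zero' ℝ) h4)

/-- If `ℓ ∈ E(Φ)` does not lie in the radical `V^⊥ = {v | ∀ u, B v u = 0}` of `B`,
then `ℓ` lies in the topological closure of `E₂°`. -/
theorem statement17 (B : LinearMap.BilinForm ℝ V) (Δ : Module.Basis ι ℝ V)
    (hsymm : ∀ u v : V, B u v = B v u)
    (hdiag : ∀ i : ι, B (Δ i) (Δ i) = 1)
    (hoff : ∀ i j : ι, i ≠ j → B (Δ i) (Δ j) ≤ -1 ∨
      ∃ k : ℕ, 2 ≤ k ∧ B (Δ i) (Δ j) = -Real.cos (Real.pi / (k : ℝ)))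
    (ℓ : V) (hℓ : ℓ ∈ Eset B Δ) (hrad : ¬ ∀ u : V, B ℓ u = 0) :
    ℓ ∈ closure (E2circ B Δ) := by
  have : FiniteDimensional ℝ V := Δ.finiteDimensional_of_finite
  have hiso := accPt_isotropic B Δ hsymm hdiag hoff ℓ hℓ
  obtain ⟨S, hS⟩ := exists_S B Δ hdiag
  obtain ⟨i, hi⟩ : ∃ i, B (Δ i) ℓ ≠ 0 := by
    by_contra hcon
    push Not at hcon
    apply hrad
    have : B ℓ = 0 := Δ.ext (fun i => by rw [hsymm, hcon i]; rfl)
    intro u; rw [this]; rfl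
  obtain ⟨ε, hε, hεb⟩ : ∃ ε : ℝ, ε ^ 2 = 1 ∧ ε * |B (Δ i) ℓ| = B (Δ i) ℓ := by
    rcases le_total 0 (B (Δ i) ℓ) with h | h
    · exact ⟨1, by norm_num, by rw [abs_of_nonneg h]; ring⟩
    · exact ⟨-1, by norm_num, by rw [abs_of_nonpos h]; ring⟩
  have cB := cont_B B
  have cb : Continuous (fun x => B (Δ i) x) := LinearMap.continuous_of_finiteDimensional _
  have cc : Continuous (fun x => B x x) := cB.comp (continuous_id.prodMk continuous_id)
  obtain ⟨σ, hσ⟩ : ∃ σ : V → ℝ, σ = fun x =>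
    -B (Δ i) x + ε * Real.sqrt (B (Δ i) x ^ 2 - B x x) := ⟨_, rfl⟩
  have cσ : Continuous σ := by
    rw [hσ]
    exact cb.neg.add (continuous_const.mul (Real.continuous_sqrt.comp ((cb.pow 2).sub cc)))
  have σℓ : σ ℓ = 0 := by
    rw [hσ]; simp only
    rw [hiso, sub_zero, Real.sqrt_sq_eq_abs, hεb]; ring
  have e1 : ∀ᶠ x in 𝓝 ℓ, 0 < B (Δ i) x ^ 2 - B x x := by
    refine ((cb.pow 2).sub cc).continuousAt.eventually_const_lt ?_
    change 0 < B (Δ i) ℓ ^ 2 - B ℓ ℓ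
    rw [hiso, sub_zero]; positivity
  have e2 : ∀ᶠ x in 𝓝 ℓ, 0 < 1 + σ x := by
    refine (continuous_const.add cσ).continuousAt.eventually_const_lt ?_
    change 0 < 1 + σ ℓ
    rw [σℓ]; norm_num
  have e3 : ∀ᶠ x in 𝓝 ℓ, x ≠ Δ i := by
    refine isOpen_ne.mem_nhds ?_
    rintro rfl
    rw [hdiag] at hiso; norm_num at hiso
  have cF : Tendsto (fun x => (1 + σ x)⁻¹ • (x + σ x • Δ i)) (𝓝 ℓ) (𝓝 ℓ) := by
    have : ContinuousAt (fun x => (1 + σ x)⁻¹ • (x + σ x • Δ i)) ℓ := by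
      refine ContinuousAt.smul (ContinuousAt.inv₀ (continuous_const.add cσ).continuousAt ?_) ?_
      · rw [σℓ]; norm_num
      · exact (continuous_id.add (cσ.smul continuous_const)).continuousAt
    have h2 := this.tendsto
    simpa [σℓ] using h2
  rw [mem_closure_iff_frequently]
  refine cF.frequently ?_
  have hacc := accPt_iff_frequently.1 hℓ
  refine (((hacc.and_eventually e1).and_eventually e2).and_eventually e3).mono ?_
  rintro x ⟨⟨⟨⟨-, hxN⟩, h1⟩, h2⟩, h3⟩
  obtain ⟨lx, -, -⟩ := nroot_facts B Δ S hsymm hdiag hS hxN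
  obtain ⟨ρ, hρ, rfl⟩ := hxN
  set x := nrm Δ ρ
  refine ⟨i, ρ, hρ, h3, ⟨(1 + σ x)⁻¹, ?_⟩, ?_, ?_⟩
  · have : (1 + σ x)⁻¹ * σ x = 1 - (1 + σ x)⁻¹ := by field_simp; ring
    rw [smul_add, smul_smul, this]; module
  · have hq : B x x + 2 * σ x * B (Δ i) x + σ x ^ 2 = 0 := by
      have hs := Real.sq_sqrt h1.le
      rw [hσ]; simp only
      set q := Real.sqrt (B (Δ i) x ^ 2 - B x x)
      have : (ε * q)^2 = B (Δ i) x ^ 2 - B x x := by rw [mul_pow, hε, hs, one_mul]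
      linear_combination this
    have : B (x + σ x • Δ i) (x + σ x • Δ i) = 0 := by
      simp only [map_add, map_smul, LinearMap.add_apply, LinearMap.smul_apply, smul_eq_mul, hdiag]
      rw [hsymm x (Δ i)]
      linear_combination hq
    simp only [map_smul, LinearMap.smul_apply, this, smul_zero]
  · rw [l1_smul, l1_add, l1_smul, lx, l1_basis, mul_one, inv_mul_cancel₀ h2.ne']
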